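/- arXiv:2602.16046 — 2 statements merged into one kernel-verified Lean document; each statement's English description precedes it below -/
import Mathlib

section
/- Assume that the dominating number 𝔡 is regular (cf(𝔡) = 𝔡). Then for every 𝔡-Lusin set X ⊆ [ω]^ω there is a set Y ⊆ P(ℕ) such that every finite power of Y is Menger but the product space X × Y is not Menger. -/
open Cardinal

/-- Subsets of `ℕ` are identified with their characteristic functions `ℕ → Bool`;
this way `P(ℕ)` is the Cantor cube `2^ℕ`, carrying the product topology. -/
abbrev CSet : Type := ℕ → Bool

/-- The subset of `ℕ` coded by `a : CSet`. -/
def supp (a : CSet) : Set ℕ := {n | a n = true}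

/-- `a ∈ [ω]^ω`: the coded set is infinite. -/
def InfS (a : CSet) : Prop := (supp a).Infinite

/-- The increasing enumeration of the set coded by `a`. -/
noncomputable def enum (a : CSet) : ℕ → ℕ := Nat.nth (fun n => a n = true)

/-- `a ≤* b`: the set `[a ≤ b]` (computed on increasing enumerations) is cofinite. -/
def LeStarS (a b : CSet) : Prop := {n | ¬ enum a n ≤ enum b n}.Finite

/-- `a ≤_U b`: the set `[a ≤ b]` (computed on increasing enumerations) is in `U`. -/
def LeUS (U : Ultrafilter ℕ) (a b : CSet) : Prop := {n | enum a n ≤ enum b n} ∈ U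

/-- An ultrafilter is free if it extends the cofinite filter. -/
def Free (U : Ultrafilter ℕ) : Prop := (U : Filter ℕ) ≤ Filter.cofinite

/-- A subset of `[ω]^ω` is bounded if some element of `[ω]^ω` `≤*`-dominates it. -/
def BoundedS (A : Set CSet) : Prop := ∃ b : CSet, InfS b ∧ ∀ a ∈ A, LeStarS a b

/-- A subset of `[ω]^ω` is `≤_U`-bounded if some element of `[ω]^ω` `≤_U`-dominates it. -/
def UBoundedS (U : Ultrafilter ℕ) (A : Set CSet) : Prop :=
  ∃ b : CSet, InfS b ∧ ∀ a ∈ A, LeUS U a b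

/-- `D ⊆ [ω]^ω` is dominating if it `≤*`-dominates every element of `[ω]^ω`. -/
def DominatingS (D : Set CSet) : Prop :=
  (∀ d ∈ D, InfS d) ∧ ∀ a : CSet, InfS a → ∃ d ∈ D, LeStarS a d

/-- `𝔡`: the least cardinality of a dominating subset of `[ω]^ω`. -/
noncomputable def frakDS : Cardinal := sInf {c | ∃ D : Set CSet, DominatingS D ∧ c = #D}

/-- `𝔟(U)`: the least cardinality of a `≤_U`-unbounded subset of `[ω]^ω`. -/
noncomputable def frakBUS (U : Ultrafilter ℕ) : Cardinal :=
  sInf {c | ∃ A : Set CSet, (∀ a ∈ A, InfS a) ∧ ¬ UBoundedS U A ∧ c = #A}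

/-- `Y ⊆ [ω]^ω` is a `U`-scale if for every `b ∈ [ω]^ω` the relation `b ≤_U y` holds
for all but fewer than `𝔟(U)` many `y ∈ Y`. -/
def UScaleS (U : Ultrafilter ℕ) (Y : Set CSet) : Prop :=
  (∀ y ∈ Y, InfS y) ∧
    ∀ b : CSet, InfS b → #({y ∈ Y | ¬ LeUS U b y} : Set CSet) < frakBUS U

/-- `Fin`: the family of (codes of) finite subsets of `ℕ`. -/
def FinS : Set CSet := {a | (supp a).Finite}

/-- `2u := {2n : n ∈ u}` on codes. -/
def double (x : CSet) : CSet := fun n => if n % 2 = 0 then x (n / 2) else false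

/-- `a ⊎ b := {2k : k ∈ a} ∪ {2k+1 : k ∈ b}` on codes. -/
def uplus (a b : CSet) : CSet := fun n => if n % 2 = 0 then a (n / 2) else b (n / 2)

/-- Symmetric difference `⊕` on codes. -/
def symmD (a b : CSet) : CSet := fun n => xor (a n) (b n)

/-- `2U`: the ultrafilter generated by `{2u : u ∈ U}`, i.e. the pushforward of `U`
under `n ↦ 2n`. -/
def twoU (U : Ultrafilter ℕ) : Ultrafilter ℕ := U.map (fun n => 2 * n)

/-- A space is Menger if for every sequence of open covers there are finite
subfamilies whose unions form a cover. -/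
def Menger (Z : Type*) [TopologicalSpace Z] : Prop :=
  ∀ 𝒰 : ℕ → Set (Set Z), (∀ n, (∀ u ∈ 𝒰 n, IsOpen u) ∧ ⋃₀ 𝒰 n = Set.univ) →
    ∃ F : ℕ → Set (Set Z), (∀ n, F n ⊆ 𝒰 n ∧ (F n).Finite) ∧ (⋃ n, ⋃₀ F n) = Set.univ

/-- `[ω]^ω` as a subspace of the Cantor cube `P(ℕ)`. -/
def OmegaInf : Set CSet := {a | InfS a}

/-- The number of elements below `m` of the set coded by `a`. -/
def cnt (a : CSet) (m : ℕ) : ℕ := ∑ i ∈ Finset.range m, (a i).toNat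

lemma cnt_mono (a : CSet) : Monotone (cnt a) := fun _ _ h =>
  Finset.sum_le_sum_of_subset (Finset.range_mono h)

lemma cnt_succ (a : CSet) (m : ℕ) : cnt a (m + 1) = cnt a m + (a m).toNat :=
  Finset.sum_range_succ _ _

lemma cnt_le_cnt {a b : CSet} (h : ∀ i, a i = true → b i = true) (m : ℕ) :
    cnt a m ≤ cnt b m := by
  refine Finset.sum_le_sum fun i _ => ?_
  have := h i
  cases ha : a i <;> simp_all

lemma cnt_eq_card (a : CSet) (m : ℕ) :
    cnt a m = ((Finset.range m).filter fun i => a i = true).card := by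
  rw [Finset.card_filter]
  refine Finset.sum_congr rfl fun i _ => ?_
  cases a i <;> rfl

lemma continuous_cnt (m : ℕ) : Continuous fun a : CSet => cnt a m :=
  continuous_finsetSum _ fun i _ =>
    (continuous_of_discreteTopology (f := Bool.toNat)).comp (continuous_apply i)

lemma InfS.exists_lt_cnt {a : CSet} (ha : InfS a) (n : ℕ) : ∃ m, n < cnt a m := by
  have key : ∀ n, ∃ m, n ≤ cnt a m := by
    intro n
    induction n with
    | zero => exact ⟨0, Nat.zero_le _⟩
    | succ n ih =>
      obtain ⟨m, hm⟩ := ih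
      obtain ⟨k, hk, hmk⟩ := ha.exists_gt m
      refine ⟨k + 1, ?_⟩
      rw [cnt_succ, show a k = true from hk]
      have := cnt_mono a hmk.le
      simp only [Bool.toNat_true]
      omega
  exact key (n + 1)

lemma exists_cnt_le_of_mem_FinS {a : CSet} (ha : a ∈ FinS) : ∃ n, ∀ m, cnt a m ≤ n := by
  have ha : (supp a).Finite := ha
  refine ⟨ha.toFinset.card, fun m => ?_⟩
  rw [cnt_eq_card]
  refine Finset.card_le_card fun i hi => ?_
  simpa [supp] using (Finset.mem_filter.1 hi).2

lemma mem_FinS_of_cnt_le {a : CSet} {n : ℕ} (h : ∀ m, cnt a m ≤ n) : a ∈ FinS := by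
  by_contra ha
  obtain ⟨m, hm⟩ := InfS.exists_lt_cnt (a := a) ha n
  exact absurd (h m) (by omega)

lemma cnt_uplus_le (a b : CSet) (m : ℕ) : cnt (uplus a b) m ≤ cnt a m + cnt b m := by
  have key : ∀ m, cnt (uplus a b) (2 * m) = cnt a m + cnt b m := by
    intro m
    induction m with
    | zero => rfl
    | succ m ih =>
      have h1 : uplus a b (2 * m) = a m := by simp [uplus]
      have h2 : uplus a b (2 * m + 1) = b m := by
        simp [uplus, show (2 * m + 1) / 2 = m by omega]
      rw [show 2 * (m + 1) = 2 * m + 1 + 1 by ring, cnt_succ, cnt_succ, cnt_succ, cnt_succ, ih,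
        h1, h2]
      ring
  exact (cnt_mono _ (by omega)).trans (key m).le

/-- The code of a set of natural numbers. -/
noncomputable def code (s : Set ℕ) : CSet := fun i => by
  classical exact decide (i ∈ s)

@[simp] lemma code_eq_true {s : Set ℕ} {i : ℕ} : code s i = true ↔ i ∈ s := by
  simp [code]

@[simp] lemma supp_code (s : Set ℕ) : supp (code s) = s := by
  ext; simp [supp]

lemma enum_strictMono {a : CSet} (ha : InfS a) : StrictMono (enum a) :=
  Nat.nth_strictMono ha

lemma range_enum {a : CSet} (ha : InfS a) : Set.range (enum a) = supp a :=
  Nat.range_nth_of_infinite ha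

lemma infS_code_range {f : ℕ → ℕ} (hf : StrictMono f) : InfS (code (Set.range f)) := by
  rw [InfS, supp_code]
  exact Set.infinite_range_of_injective hf.injective

lemma enum_code_range {f : ℕ → ℕ} (hf : StrictMono f) : enum (code (Set.range f)) = f := by
  have h := infS_code_range hf
  rw [← (enum_strictMono h).range_inj hf, range_enum h, supp_code]

lemma exists_strictMono_ge (g : ℕ → ℕ) : ∃ f : ℕ → ℕ, StrictMono f ∧ ∀ n, g n < f n := by
  refine ⟨fun n => ∑ i ∈ Finset.range (n + 1), (g i + 1), strictMono_nat_of_lt_succ fun n => ?_,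
    fun n => ?_⟩
  · rw [Finset.sum_range_succ _ (n + 1)]
    omega
  · dsimp only
    rw [Finset.sum_range_succ]
    omega

/-- Every infinite set has arbitrarily thin infinite subsets. -/
lemma InfS.exists_thin {a : CSet} (ha : InfS a) (d : ℕ → ℕ) :
    ∃ b, InfS b ∧ (∀ i, b i = true → a i = true) ∧ ∀ n, cnt b (d n) ≤ n := by
  obtain ⟨s, hs, hds⟩ := exists_strictMono_ge d
  have hf : StrictMono (enum a ∘ s) := (enum_strictMono ha).comp hs
  refine ⟨code (Set.range (enum a ∘ s)), infS_code_range hf, fun i hi => ?_, fun n => ?_⟩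
  · obtain ⟨k, rfl⟩ := code_eq_true.1 hi
    have : enum a (s k) ∈ supp a := range_enum ha ▸ Set.mem_range_self _
    exact this
  · rw [cnt_eq_card]
    have hsub : ((Finset.range (d n)).filter fun i => code (Set.range (enum a ∘ s)) i = true) ⊆
        (Finset.range n).image (enum a ∘ s) := by
      intro i hi
      obtain ⟨hi, hi'⟩ := Finset.mem_filter.1 hi
      obtain ⟨k, rfl⟩ := code_eq_true.1 hi'
      refine Finset.mem_image_of_mem _ (Finset.mem_range.2 ?_)
      by_contra! hk
      have h1 := hf.monotone hk
      have h2 := (enum_strictMono ha).le_apply (x := s n)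
      have h3 := hds n
      have h4 := Finset.mem_range.1 hi
      simp only [Function.comp_apply] at *
      omega
    exact (Finset.card_le_card hsub).trans (Finset.card_image_le.trans (by simp))

lemma exists_dominatingS_mk_eq : ∃ D : Set CSet, DominatingS D ∧ frakDS = #D := by
  have hne : {c | ∃ D : Set CSet, DominatingS D ∧ c = #D}.Nonempty :=
    ⟨_, {a | InfS a}, ⟨fun _ h => h, fun a ha => ⟨a, ha, by simp [LeStarS]⟩⟩, rfl⟩
  exact csInf_mem hne

lemma DominatingS.exists_le_add {D : Set CSet} (hD : DominatingS D) (g : ℕ → ℕ) :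
    ∃ d ∈ D, ∃ k, ∀ n, g n ≤ enum d n + k := by
  obtain ⟨f, hf, hgf⟩ := exists_strictMono_ge g
  obtain ⟨d, hd, hfd⟩ := hD.2 _ (infS_code_range hf)
  rw [LeStarS, enum_code_range hf] at hfd
  refine ⟨d, hd, ∑ i ∈ hfd.toFinset, f i, fun n => ?_⟩
  have h1 := hgf n
  by_cases hn : f n ≤ enum d n
  · omega
  · have h2 : f n ≤ ∑ i ∈ hfd.toFinset, f i :=
      Finset.single_le_sum (f := f) (fun _ _ => Nat.zero_le _) (by simpa using hn)
    omega

lemma aleph0_le_frakDS : ℵ₀ ≤ frakDS := by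
  obtain ⟨D, hD, hcard⟩ := exists_dominatingS_mk_eq
  rw [hcard, ← Cardinal.infinite_iff, Set.infinite_coe_iff]
  intro hfin
  obtain ⟨d, hd, k, hk⟩ := hD.exists_le_add fun n => (∑ a ∈ hfin.toFinset, enum a n) + n + 1
  have h1 := hk k
  have h2 : enum d k ≤ ∑ a ∈ hfin.toFinset, enum a k :=
    Finset.single_le_sum (f := fun a => enum a k) (fun _ _ => Nat.zero_le _) (by simpa using hd)
  omega

/-- There is a family of `𝔡` functions dominating everywhere. -/
lemma exists_dominating_family :
    ∃ d : frakDS.ord.ToType → ℕ → ℕ, ∀ g : ℕ → ℕ, ∃ i, ∀ n, g n ≤ d i n := by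
  obtain ⟨D, hD, hcard⟩ := exists_dominatingS_mk_eq
  have heq : #(D × ℕ) = #(frakDS.ord.ToType) := by
    rw [mk_ord_toType, mk_prod, ← hcard]
    simpa using mul_aleph0_eq aleph0_le_frakDS
  obtain ⟨e⟩ := Cardinal.eq.1 heq
  refine ⟨fun i n => enum (e.symm i).1 n + (e.symm i).2, fun g => ?_⟩
  obtain ⟨a, ha, k, hk⟩ := hD.exists_le_add g
  exact ⟨e (⟨a, ha⟩, k), by simpa using hk⟩

/-- The indices at which the set coded by `a` is sparse relative to `b`. -/
def sparse (a : CSet) (b : ℕ → ℕ) : Set ℕ := {n | 2 * cnt a (b n) ≤ n}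

lemma sparse_anti {a : CSet} {b c : ℕ → ℕ} (h : ∀ n, b n ≤ c n) : sparse a c ⊆ sparse a b :=
  fun n hn => (Nat.mul_le_mul_left 2 (cnt_mono a (h n))).trans hn

lemma isOpen_setOf_mem_sparse (n : ℕ) (b : ℕ → ℕ) :
    IsOpen {x : OmegaInf | n ∈ sparse x.1 b} :=
  (isOpen_discrete (Set.Iic n)).preimage
    ((continuous_of_discreteTopology (f := fun k : ℕ => 2 * k)).comp
      ((continuous_cnt (b n)).comp continuous_subtype_val))

lemma dense_setOf_exists_mem_sparse {u : Set ℕ} (hu : u.Infinite) (b : ℕ → ℕ) (N : ℕ) :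
    Dense {x : OmegaInf | ∃ n ∈ u, N ≤ n ∧ n ∈ sparse x.1 b} := by
  intro x
  choose n hn hln using fun l : ℕ => hu.exists_gt (2 * l + N)
  let y : ℕ → CSet := fun l i => if i < l ∨ b (n l) ≤ i then x.1 i else false
  have hy : ∀ l, InfS (y l) := fun l hfin => x.2 <| by
    refine (hfin.union (Set.finite_Iio (b (n l)))).subset fun i hi => ?_
    by_cases hib : i < b (n l)
    · exact Or.inr hib
    · left
      have hi : x.1 i = true := hi
      simp only [supp, Set.mem_ofPred_eq, y]
      rw [if_pos (Or.inr (not_lt.1 hib)), hi]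
  refine mem_closure_of_tendsto (f := fun l => (⟨y l, hy l⟩ : OmegaInf)) (b := Filter.atTop) ?_
    (Filter.Eventually.of_forall fun l => ⟨n l, hn l, ?_, ?_⟩)
  · rw [tendsto_subtype_rng, tendsto_pi_nhds]
    intro i
    refine tendsto_nhds_of_eventually_eq ?_
    filter_upwards [Filter.eventually_gt_atTop i] with l hl
    simp [y, hl]
  · have := hln l
    omega
  · have hcard : cnt (y l) (b (n l)) ≤ l := by
      rw [cnt_eq_card]
      refine (Finset.card_le_card (t := Finset.range l) fun i hi => ?_).trans (by simp)
      obtain ⟨hi, hi'⟩ := Finset.mem_filter.1 hi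
      rw [Finset.mem_range] at hi ⊢
      by_contra hil
      simp [y, hil, hi.not_ge] at hi'
    have := hln l
    simp only [sparse, Set.mem_ofPred_eq]
    omega

lemma isMeagre_setOf_finite_sparse {u : Set ℕ} (hu : u.Infinite) (b : ℕ → ℕ) :
    IsMeagre {x : OmegaInf | (u ∩ sparse x.1 b).Finite} := by
  have hmem : (⋂ N : ℕ, {x : OmegaInf | ∃ n ∈ u, N ≤ n ∧ n ∈ sparse x.1 b}) ∈
      residual OmegaInf := by
    refine countable_iInter_mem.2 fun N => residual_of_dense_open ?_
      (dense_setOf_exists_mem_sparse hu b N)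
    simp only [Set.ofPred_exists, Set.ofPred_and]
    refine isOpen_iUnion fun n => ?_
    by_cases h : n ∈ u ∧ N ≤ n
    · simpa [h] using isOpen_setOf_mem_sparse n b
    · rcases not_and_or.1 h with h | h <;> simp [h]
  refine Filter.mem_of_superset hmem fun x hx hfin => ?_
  obtain ⟨M, hM⟩ := hfin.bddAbove
  obtain ⟨n, hnu, hn, hns⟩ := Set.mem_iInter.1 hx (M + 1)
  have := hM ⟨hnu, hns⟩
  omega

/-- Recursion along a well-order, with the earlier values extended to a total function. -/
lemma exists_eq_of_wellFoundedLT {I A : Type*} [LinearOrder I] [WellFoundedLT I] [Nonempty A]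
    (c : (I → A) → I → A) :
    ∃ x : I → A, ∀ j, ∃ y : I → A, (∀ i < j, y i = x i) ∧ x j = c y j := by
  classical
  let step : (j : I) → ((i : I) → i < j → A) → A := fun j g =>
    c (fun i => if h : i < j then g i h else Classical.arbitrary A) j
  refine ⟨(wellFounded_lt (α := I)).fix step, fun j => ⟨fun i => if i < j then
    (wellFounded_lt (α := I)).fix step i else Classical.arbitrary A, fun i hi => if_pos hi, ?_⟩⟩
  rw [WellFounded.fix_eq]
  simp only [step, dite_eq_ite]

lemma mk_Iio_frakDS_lt (j : frakDS.ord.ToType) : #(Set.Iio j) < frakDS := by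
  simpa using mk_Iio_lt j

lemma mk_finset_lt {α : Type} {κ : Cardinal.{0}} (hκ : ℵ₀ ≤ κ) (h : #α < κ) :
    #(Finset α) < κ := by
  cases finite_or_infinite α
  · exact (mk_lt_aleph0).trans_le hκ
  · rwa [mk_finset_of_infinite]

lemma exists_gt_of_mk_lt (hreg : frakDS.ord.cof = frakDS) {S : Set frakDS.ord.ToType}
    (hS : #S < frakDS) : ∃ j, ∀ i ∈ S, i < j := by
  have h : ¬ IsCofinal S := fun h => by
    have := Order.cof_le h
    rw [Ordinal.cof_toType, hreg] at this
    exact this.not_gt hS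
  simpa [IsCofinal] using h

section Ultrafilter

variable {I : Type*} [LinearOrder I]

/-- The indices at which each `x j`, `j ∈ F`, is sparse relative to all the earlier `d i`,
`i ∈ F`. -/
def commonSparse (d : I → ℕ → ℕ) (x : I → OmegaInf) (F : Finset I) : Set ℕ :=
  {n | ∀ j ∈ F, ∀ i ∈ F, i < j → n ∈ sparse (x j).1 (d i)}

lemma commonSparse_anti (d : I → ℕ → ℕ) (x : I → OmegaInf) {F G : Finset I} (h : F ⊆ G) :
    commonSparse d x G ⊆ commonSparse d x F :=
  fun _ hn j hj i hi hij => hn j (h hj) i (h hi) hij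

lemma commonSparse_congr (d : I → ℕ → ℕ) {x y : I → OmegaInf} {F : Finset I}
    (h : ∀ i ∈ F, x i = y i) : commonSparse d x F = commonSparse d y F := by
  ext n
  refine forall₂_congr fun j hj => ?_
  rw [h j hj]

lemma exists_ultrafilter_of_infinite (d : I → ℕ → ℕ) (x : I → OmegaInf)
    (h : ∀ F, (commonSparse d x F).Infinite) :
    ∃ U : Ultrafilter ℕ, Free U ∧ ∀ i j, i < j → sparse (x j).1 (d i) ∈ U := by
  classical
  let f : Filter ℕ := ⨅ F : Finset I, Filter.principal (commonSparse d x F) ⊓ Filter.cofinite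
  have hne : f.NeBot := by
    refine Filter.iInf_neBot_of_directed' ?_ fun F => ?_
    · intro F G
      refine ⟨F ∪ G, ?_, ?_⟩
      · exact inf_le_inf_right _ (Filter.principal_mono.2
          (commonSparse_anti d x Finset.subset_union_left))
      · exact inf_le_inf_right _ (Filter.principal_mono.2
          (commonSparse_anti d x Finset.subset_union_right))
    · rw [inf_comm]
      exact Filter.cofinite_inf_principal_neBot_iff.2 (h F)
  have hle : ((Ultrafilter.of f : Ultrafilter ℕ) : Filter ℕ) ≤ f := Ultrafilter.of_le f
  refine ⟨Ultrafilter.of f, hle.trans ((iInf_le _ ∅).trans inf_le_right), fun i j hij => ?_⟩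
  have := (hle.trans ((iInf_le _ {i, j}).trans inf_le_left)) (Filter.mem_principal_self _)
  exact Filter.mem_of_superset this fun n hn => hn j (by simp) i (by simp) hij

end Ultrafilter

/-- A `𝔡`-Lusin set contains a sequence of length `𝔡` whose terms are, modulo some free
ultrafilter, sparse relative to all the earlier functions of a given sequence. -/
lemma exists_sparse_sequence (hreg : frakDS.ord.cof = frakDS)
    (X : Set OmegaInf) (hXcard : frakDS ≤ #X)
    (hXlusin : ∀ M : Set OmegaInf, IsMeagre M → #(X ∩ M : Set OmegaInf) < frakDS)
    (d : frakDS.ord.ToType → ℕ → ℕ) :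
    ∃ (x : frakDS.ord.ToType → OmegaInf) (U : Ultrafilter ℕ), (∀ i, x i ∈ X) ∧ Free U ∧
      ∀ i j, i < j → sparse (x j).1 (d i) ∈ U := by
  classical
  have hregular : frakDS.IsRegular := ⟨aleph0_le_frakDS, hreg.ge⟩
  have step : ∀ (x : frakDS.ord.ToType → OmegaInf) (j : frakDS.ord.ToType), ∃ a ∈ X,
      ∀ F : Finset frakDS.ord.ToType, (∀ i ∈ F, i < j) → (commonSparse d x F).Infinite →
        (commonSparse d x F ∩ sparse a.1 (fun n => F.sup (d · n))).Infinite := by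
    intro x j
    by_contra! hno
    let e : Finset (Set.Iio j) → Finset frakDS.ord.ToType :=
      fun F => F.map (Function.Embedding.subtype _)
    let M : Finset (Set.Iio j) → Set OmegaInf := fun F =>
      {a | (commonSparse d x (e F)).Infinite ∧
        (commonSparse d x (e F) ∩ sparse a.1 (fun n => (e F).sup (d · n))).Finite}
    have hM : ∀ F, IsMeagre (M F) := by
      intro F
      by_cases h : (commonSparse d x (e F)).Infinite
      · exact (isMeagre_setOf_finite_sparse h _).mono fun a ha => ha.2
      · convert IsMeagre.empty (X := OmegaInf)
        exact Set.eq_empty_of_forall_notMem fun a ha => h ha.1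
    have hcover : X ⊆ ⋃ F, X ∩ M F := by
      intro a ha
      obtain ⟨F, hF, hinf, hfin⟩ := hno a ha
      have heF : e (F.subtype (· ∈ Set.Iio j)) = F := Finset.subtype_map_of_mem hF
      refine Set.mem_iUnion.2 ⟨F.subtype (· ∈ Set.Iio j), ha, ?_⟩
      simp only [M, heF]
      exact ⟨hinf, hfin⟩
    have hlt : #(⋃ F, X ∩ M F : Set OmegaInf) < frakDS :=
      (card_iUnion_lt_iff_forall_of_isRegular hregular
        (mk_finset_lt aleph0_le_frakDS (mk_Iio_frakDS_lt j))).2 fun F => hXlusin _ (hM F)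
    exact (hXcard.trans (mk_le_mk_of_subset hcover)).not_gt hlt
  choose c hcX hc using step
  have : Nonempty OmegaInf := by
    by_contra h
    rw [not_nonempty_iff] at h
    have : #X = 0 := mk_eq_zero_iff.2 inferInstance
    rw [this] at hXcard
    exact (aleph0_pos.trans_le aleph0_le_frakDS).not_ge hXcard
  obtain ⟨x, hx⟩ := exists_eq_of_wellFoundedLT c
  have hinf : ∀ F, (commonSparse d x F).Infinite := by
    intro F
    induction F using Finset.induction_on_max with
    | empty => simpa [commonSparse] using Set.infinite_univ
    | insert j F hF ih =>
      obtain ⟨y, hyx, hxj⟩ := hx j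
      have hcongr : commonSparse d y F = commonSparse d x F :=
        commonSparse_congr d fun i hi => hyx i (hF i hi)
      have := hc y j F hF (hcongr ▸ ih)
      rw [hcongr, ← hxj] at this
      refine this.mono ?_
      rintro n ⟨hn, hnj⟩ k hk i hi hik
      have hiF : i ∈ F := by
        refine (Finset.mem_insert.1 hi).resolve_left ?_
        rintro rfl
        rcases Finset.mem_insert.1 hk with rfl | hk
        · exact lt_irrefl _ hik
        · exact lt_asymm hik (hF k hk)
      rcases Finset.mem_insert.1 hk with rfl | hk
      · exact sparse_anti (fun m => Finset.le_sup (f := fun i => d i m) hiF) hnj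
      · exact hn k hk i hiF hik
  obtain ⟨U, hfree, hU⟩ := exists_ultrafilter_of_infinite d x hinf
  refine ⟨x, U, fun i => ?_, hfree, hU⟩
  obtain ⟨y, -, hxi⟩ := hx i
  exact hxi ▸ hcX y i

/-- A sequence of countable open covers of `Z` admits finite initial segments covering each point
at `U`-many indices. -/
def UMenger (U : Ultrafilter ℕ) (Z : Type*) [TopologicalSpace Z] : Prop :=
  ∀ v : ℕ → ℕ → Set Z, (∀ n j, IsOpen (v n j)) → (∀ n z, ∃ j, z ∈ v n j) →
    ∃ h : ℕ → ℕ, ∀ z, {n | ∃ j < h n, z ∈ v n j} ∈ U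

lemma UMenger.menger {U : Ultrafilter ℕ} {Z : Type*} [TopologicalSpace Z]
    [SecondCountableTopology Z] (hZ : UMenger U Z) : Menger Z := by
  classical
  intro 𝒰 h𝒰
  cases isEmpty_or_nonempty Z with
  | inl _ => exact ⟨fun _ => ∅, by simp, Subsingleton.elim _ _⟩
  | inr hne =>
    have hv : ∀ n, ∃ v : ℕ → Set Z, (∀ j, v j ∈ 𝒰 n) ∧ ∀ z, ∃ j, z ∈ v j := by
      intro n
      obtain ⟨T, hTc, hT𝒰, hT⟩ := TopologicalSpace.isOpen_sUnion_countable (𝒰 n) (h𝒰 n).1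
      rw [(h𝒰 n).2] at hT
      have hTne : T.Nonempty := by
        rw [Set.nonempty_iff_ne_empty]
        rintro rfl
        exact Set.empty_ne_univ (by simpa using hT)
      obtain ⟨v, rfl⟩ := hTc.exists_eq_range hTne
      refine ⟨v, fun j => hT𝒰 (Set.mem_range_self j), fun z => ?_⟩
      have hz : z ∈ ⋃₀ Set.range v := hT ▸ Set.mem_univ z
      simpa using hz
    choose v hv𝒰 hv using hv
    obtain ⟨h, hh⟩ := hZ v (fun n j => (h𝒰 n).1 _ (hv𝒰 n j)) hv
    refine ⟨fun n => v n '' Set.Iio (h n), fun n => ⟨?_, (Set.finite_Iio _).image _⟩, ?_⟩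
    · rintro _ ⟨j, -, rfl⟩
      exact hv𝒰 n j
    · refine Set.eq_univ_of_forall fun z => ?_
      obtain ⟨n, j, hj, hz⟩ := U.nonempty_of_mem (hh z)
      exact Set.mem_iUnion.2 ⟨n, v n j, ⟨j, hj, rfl⟩, hz⟩

/-- Finitely many members of an open cover of a power of `Y ⊇ Fin` cover all tuples of
sufficiently sparse sets. -/
lemma exists_forall_cnt_le_mem {k : ℕ} {Y : Set CSet} (hY : FinS ⊆ Y)
    {v : ℕ → Set (Fin k → Y)} (hvo : ∀ j, IsOpen (v j)) (hv : ∀ t, ∃ j, t ∈ v j) (n : ℕ) :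
    ∃ m, ∀ t : Fin k → Y, (∀ i, cnt (t i).1 m ≤ n) → ∃ j < m, t ∈ v j := by
  have hind : Topology.IsInducing (Pi.map fun (_ : Fin k) (y : Y) => y.1) :=
    .piMap fun _ => .subtypeVal
  choose W hWo hWv using fun j => hind.isOpen_iff.1 (hvo j)
  let C : ℕ → Set (Fin k → CSet) := fun m => {t | ∀ i, cnt (t i) m ≤ n}
  have hC : ∀ m, IsClosed (C m) := by
    intro m
    simp only [C, Set.ofPred_forall]
    exact isClosed_iInter fun i => (isClosed_discrete (Set.Iic n)).preimage
      ((continuous_cnt m).comp (continuous_apply i))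
  let O : ℕ → Set (Fin k → CSet) := fun m => (⋃ j < m, W j) ∪ (C m)ᶜ
  have hO : ∀ m, IsOpen (O m) := fun m =>
    (isOpen_biUnion fun j _ => hWo j).union (hC m).isOpen_compl
  have hOmono : Monotone O := by
    intro m m' hmm'
    refine Set.union_subset_union (Set.biUnion_subset_biUnion_left fun j hj => ?_)
      (Set.compl_subset_compl.2 fun t ht i => (cnt_mono _ hmm').trans (ht i))
    exact lt_of_lt_of_le (show j < m from hj) hmm'
  have hOcover : Set.univ ⊆ ⋃ m, O m := by
    intro t _
    by_cases ht : ∀ m, t ∈ C m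
    · let s : Fin k → Y := fun i => ⟨t i, hY (mem_FinS_of_cnt_le fun m => ht m i)⟩
      obtain ⟨j, hj⟩ := hv s
      rw [← hWv j] at hj
      exact Set.mem_iUnion.2 ⟨j + 1, Or.inl (Set.mem_biUnion (Nat.lt_succ_self j) hj)⟩
    · obtain ⟨m, hm⟩ := not_forall.1 ht
      exact Set.mem_iUnion.2 ⟨m, Or.inr hm⟩
  obtain ⟨m, hm⟩ := isCompact_univ.elim_directed_cover O hO hOcover hOmono.directed_le
  refine ⟨m, fun t ht => ?_⟩
  rcases hm (Set.mem_univ (Pi.map (fun (_ : Fin k) (y : Y) => y.1) t)) with h | h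
  · obtain ⟨j, hj, hjW⟩ := Set.mem_iUnion₂.1 h
    refine ⟨j, hj, ?_⟩
    rw [← hWv j]
    exact hjW
  · exact absurd ht h

lemma uMenger_pow {U : Ultrafilter ℕ} (hfree : Free U) {κ : Cardinal.{0}} (hκ : ℵ₀ ≤ κ)
    {I : Type} (y : I → CSet)
    (hy : ∀ b : ℕ → ℕ, ∃ S : Set I, #S < κ ∧ ∀ i ∉ S, {n | cnt (y i) (b n) ≤ n} ∈ U)
    (hbdd : ∀ {J : Type} (g : J → ℕ → ℕ), #J < κ → ∃ h : ℕ → ℕ, ∀ j, {n | g j n ≤ h n} ∈ U)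
    (k : ℕ) : UMenger U (Fin k → (Set.range y ∪ FinS : Set CSet)) := by
  induction k with
  | zero =>
    intro v _ hv
    choose j hj using fun n => hv n default
    refine ⟨fun n => j n + 1, fun z => Filter.univ_mem' fun n => ⟨j n, Nat.lt_succ_self _, ?_⟩⟩
    rw [Subsingleton.elim z default]
    exact hj n
  | succ k ih =>
    intro v hvo hv
    choose b hb using fun n =>
      exists_forall_cnt_le_mem Set.subset_union_right (hvo n) (hv n) n
    obtain ⟨S, hS, hSU⟩ := hy b
    have hmemY : ∀ i, y i ∈ Set.range y ∪ FinS := fun i => Or.inl (Set.mem_range_self i)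
    have hslice : ∀ p : S × Fin (k + 1), ∃ g : ℕ → ℕ,
        ∀ t : Fin k → (Set.range y ∪ FinS : Set CSet),
          {n | ∃ j < g n, p.2.insertNth (⟨y p.1, hmemY p.1⟩ : (Set.range y ∪ FinS : Set CSet)) t
            ∈ v n j} ∈ U := by
      intro p
      have hcont : Continuous fun t : Fin k → (Set.range y ∪ FinS : Set CSet) =>
          (p.2.insertNth (⟨y p.1, hmemY p.1⟩ : (Set.range y ∪ FinS : Set CSet)) t :
            Fin (k + 1) → (Set.range y ∪ FinS : Set CSet)) :=
        Continuous.finInsertNth p.2 continuous_const continuous_id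
      exact ih (fun n j => _ ⁻¹' v n j) (fun n j => (hvo n j).preimage hcont) fun n t => hv n _
    choose g hg using hslice
    have hcard : #(S × Fin (k + 1)) < κ := by
      rw [mk_prod, lift_id, lift_id]
      exact mul_lt_of_lt hκ hS (mk_lt_aleph0.trans_le hκ)
    obtain ⟨h, hh⟩ := hbdd g hcard
    refine ⟨fun n => max (b n) (h n), fun t => ?_⟩
    by_cases hbad : ∃ (i : S) (l : Fin (k + 1)), (t l).1 = y i
    · obtain ⟨i, l, hil⟩ := hbad
      filter_upwards [hh (i, l), hg (i, l) (l.removeNth t)] with n hn hn'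
      obtain ⟨j, hj, hjv⟩ := hn'
      refine ⟨j, (hj.trans_le hn).trans_le (le_max_right _ _), ?_⟩
      have hti : (⟨y i, hmemY i⟩ : (Set.range y ∪ FinS : Set CSet)) = t l := Subtype.ext hil.symm
      simpa only [hti, Fin.insertNth_self_removeNth] using hjv
    · push Not at hbad
      have hgood : ∀ l, {n | cnt (t l).1 (b n) ≤ n} ∈ U := by
        intro l
        rcases (t l).2 with ⟨i, hi⟩ | hfin
        · rw [← hi]
          exact hSU i fun hiS => hbad ⟨i, hiS⟩ l hi.symm
        · obtain ⟨N, hN⟩ := exists_cnt_le_of_mem_FinS hfin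
          refine hfree ?_
          rw [Nat.cofinite_eq_atTop]
          filter_upwards [Filter.eventually_ge_atTop N] with n hn
          exact (hN _).trans hn
      filter_upwards [Filter.eventually_all.2 hgood] with n hn
      obtain ⟨j, hj, hjv⟩ := hb n t hn
      exact ⟨j, hj.trans_le (le_max_left _ _), hjv⟩

/-- If the sets coded by `x j` are sparse modulo `U` relative to all earlier terms of a dominating
family, then fewer than `𝔡` functions are bounded modulo `U`. -/
lemma exists_bound_mod_ultrafilter (hreg : frakDS.ord.cof = frakDS)
    {d : frakDS.ord.ToType → ℕ → ℕ} (hd : ∀ g : ℕ → ℕ, ∃ i, ∀ n, g n ≤ d i n)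
    {x : frakDS.ord.ToType → OmegaInf} {U : Ultrafilter ℕ}
    (hU : ∀ i j, i < j → sparse (x j).1 (d i) ∈ U)
    {J : Type} (g : J → ℕ → ℕ) (hJ : #J < frakDS) :
    ∃ h : ℕ → ℕ, ∀ j, {n | g j n ≤ h n} ∈ U := by
  choose i hi using fun j => hd (g j)
  obtain ⟨δ, hδ⟩ := exists_gt_of_mk_lt hreg (S := Set.range i) (mk_range_le.trans_lt hJ)
  choose h hh using InfS.exists_lt_cnt (x δ).2
  refine ⟨h, fun j => ?_⟩
  filter_upwards [hU (i j) δ (hδ _ (Set.mem_range_self j))] with n hn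
  refine (hi j n).trans (le_of_not_gt fun hlt => ?_)
  have h1 := cnt_mono (x δ).1 hlt.le
  have h2 := hh n
  have h3 : 2 * cnt (x δ).1 (d (i j) n) ≤ n := hn
  omega

lemma continuous_symmD_double : Continuous fun p : CSet × CSet => symmD (double p.1) p.2 := by
  refine continuous_pi fun n => ?_
  by_cases hn : n % 2 = 0
  · simp only [symmD, double, hn, if_true]
    have hxor : Continuous fun q : Bool × Bool => xor q.1 q.2 := continuous_of_discreteTopology
    have hpair : Continuous fun p : CSet × CSet => (p.1 (n / 2), p.2 n) := by fun_prop
    exact hxor.comp hpair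
  · simp only [symmD, double, hn, if_false, Bool.false_xor]
    exact (continuous_apply n).comp continuous_snd

lemma infS_symmD_double_of_mem_FinS {a y : CSet} (ha : InfS a) (hy : y ∈ FinS) :
    InfS (symmD (double a) y) := by
  intro hfin
  have hinj : Set.InjOn (fun n : ℕ => 2 * n) (supp a) := fun m _ n _ h => by
    dsimp only at h
    omega
  refine (ha.image hinj) ((hfin.union hy).subset ?_)
  rintro _ ⟨n, hn, rfl⟩
  have hn : a n = true := hn
  by_cases hyn : y (2 * n) = true
  · exact Or.inr hyn
  · left
    simp [supp, symmD, double, hn, hyn]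

lemma infS_symmD_double_uplus (a b : CSet) {z : CSet} (hz : InfS z) :
    InfS (symmD (double a) (uplus b z)) := by
  have hinj : Set.InjOn (fun n : ℕ => 2 * n + 1) (supp z) := fun m _ n _ h => by
    dsimp only at h
    omega
  refine (hz.image hinj).mono ?_
  rintro _ ⟨n, hn, rfl⟩
  have hn : z n = true := hn
  simp [supp, symmD, double, uplus, show (2 * n + 1) / 2 = n by omega, hn]

lemma cnt_symmD_double_uplus_le (a z : CSet) (m : ℕ) :
    cnt (symmD (double a) (uplus a z)) m ≤ cnt z m := by
  have h : symmD (double a) (uplus a z) = uplus (fun _ => false) z := by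
    funext n
    by_cases hn : n % 2 = 0 <;> simp [symmD, double, uplus, hn]
  rw [h]
  refine (cnt_uplus_le _ _ m).trans ?_
  simp [cnt]

lemma not_menger_prod_of_thin {I : Type*} {X : Set OmegaInf} {d : I → ℕ → ℕ}
    (hd : ∀ g : ℕ → ℕ, ∃ i, ∀ n, g n ≤ d i n) {x : I → OmegaInf} (hxX : ∀ i, x i ∈ X)
    {z : I → CSet} (hz : ∀ i, InfS (z i)) (hzd : ∀ i n, cnt (z i) (d i n) ≤ n) :
    ¬ Menger (X × (Set.range (fun i => uplus (x i).1 (z i)) ∪ FinS : Set CSet)) := by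
  set Y : Set CSet := Set.range (fun i => uplus (x i).1 (z i)) ∪ FinS
  intro hM
  let E : X × Y → CSet := fun p => symmD (double p.1.1.1) p.2.1
  have hE : Continuous E := continuous_symmD_double.comp
    (((continuous_subtype_val.comp continuous_subtype_val).comp continuous_fst).prodMk
      (continuous_subtype_val.comp continuous_snd))
  have hEinf : ∀ p, InfS (E p) := by
    rintro ⟨a, y, ⟨i, rfl⟩ | hy⟩
    · exact infS_symmD_double_uplus _ _ (hz i)
    · exact infS_symmD_double_of_mem_FinS a.1.2 hy
  let O : ℕ → ℕ → Set (X × Y) := fun n m => {p | n < cnt (E p) m}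
  have hO : ∀ n m, IsOpen (O n m) := fun n m =>
    (isOpen_discrete (Set.Ioi n)).preimage ((continuous_cnt m).comp hE)
  obtain ⟨F, hF, hFcover⟩ := hM (fun n => Set.range (O n)) fun n => by
    refine ⟨?_, Set.eq_univ_of_forall fun p => ?_⟩
    · rintro _ ⟨m, rfl⟩
      exact hO n m
    · obtain ⟨m, hm⟩ := (hEinf p).exists_lt_cnt n
      exact ⟨O n m, Set.mem_range_self m, hm⟩
  have hbound : ∀ n, ∃ g, ∀ u ∈ F n, u ⊆ O n g := by
    intro n
    have hu : ∀ u ∈ F n, ∃ m, O n m = u := fun u hu => (hF n).1 hu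
    choose! m hm using hu
    obtain ⟨g, hg⟩ := ((hF n).2.image m).bddAbove
    refine ⟨g, fun u hu p hp => ?_⟩
    rw [← hm u hu] at hp
    exact lt_of_lt_of_le (show n < cnt (E p) (m u) from hp)
      (cnt_mono _ (hg (Set.mem_image_of_mem m hu)))
  choose g hg using hbound
  obtain ⟨i, hi⟩ := hd g
  let p : X × Y := (⟨x i, hxX i⟩, ⟨uplus (x i).1 (z i), Or.inl (Set.mem_range_self i)⟩)
  have hp : p ∈ ⋃ n, ⋃₀ F n := hFcover ▸ Set.mem_univ p
  obtain ⟨n, u, hu, hpu⟩ := Set.mem_iUnion.1 hp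
  have h1 : n < cnt (E p) (g n) := hg n u hu hpu
  have h2 : cnt (E p) (g n) ≤ cnt (z i) (g n) := cnt_symmD_double_uplus_le _ _ _
  have h3 := cnt_mono (z i) (hi n)
  have h4 := hzd i n
  omega

/-- if `cf(𝔡) = 𝔡`, then for every `𝔡`-Lusin set `X ⊆ [ω]^ω` there is a
set `Y ⊆ P(ℕ)` all of whose finite powers are Menger while `X × Y` is not Menger. -/
theorem stmt7 (hreg : frakDS.ord.cof = frakDS)
    (X : Set ↥OmegaInf) (hXcard : frakDS ≤ #X)
    (hXlusin : ∀ M : Set ↥OmegaInf, IsMeagre M → #(↥(X ∩ M)) < frakDS) :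
    ∃ Y : Set CSet, (∀ k : ℕ, Menger (Fin k → ↥Y)) ∧ ¬ Menger (↥X × ↥Y) := by
  obtain ⟨d, hd⟩ := exists_dominating_family
  obtain ⟨x, U, hxX, hfree, hU⟩ := exists_sparse_sequence hreg X hXcard hXlusin d
  choose z hzinf hzx hzd using fun i => InfS.exists_thin (x i).2 (d i)
  refine ⟨Set.range (fun i => uplus (x i).1 (z i)) ∪ FinS, fun k => ?_,
    not_menger_prod_of_thin hd hxX hzinf hzd⟩
  refine (uMenger_pow hfree aleph0_le_frakDS _ (fun b => ?_)
    (exists_bound_mod_ultrafilter hreg hd hU) k).menger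
  obtain ⟨β, hβ⟩ := hd b
  have hone : #({β} : Set frakDS.ord.ToType) < frakDS := by
    rw [mk_singleton]
    exact one_lt_aleph0.trans_le aleph0_le_frakDS
  obtain ⟨γ, hγ⟩ := exists_gt_of_mk_lt hreg hone
  refine ⟨Set.Iio γ, mk_Iio_frakDS_lt γ, fun i hi => ?_⟩
  have hβi : β < i := (hγ β rfl).trans_le (not_lt.1 hi)
  filter_upwards [Filter.mem_of_superset (hU β i hβi) (sparse_anti hβ)] with n hn
  have h1 := cnt_uplus_le (x i).1 (z i) (b n)
  have h2 := cnt_le_cnt (hzx i) (b n)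
  have h3 : 2 * cnt (x i).1 (b n) ≤ n := hn
  omega
end

section
/- Assume 𝔟 = 𝔡. Then every unbounded set X ⊆ [ω]^ω is ≤_U-unbounded for some free ultrafilter U on ℕ. -/
open Cardinal

/-- `a ≤* b`: the set `[a ≤ b]` is cofinite. -/
def LeStar (a b : ℕ → ℕ) : Prop := {n | ¬ a n ≤ b n}.Finite

/-- `a ≤^∞ b`: the set `[a ≤ b]` is infinite. -/
def LeInf (a b : ℕ → ℕ) : Prop := {n | a n ≤ b n}.Infinite

/-- `a ≤_U b`: the set `[a ≤ b]` belongs to the ultrafilter `U`. -/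
def LeU (U : Ultrafilter ℕ) (a b : ℕ → ℕ) : Prop := {n | a n ≤ b n} ∈ U

/-- Elements of `[ω]^ω`, identified with their increasing enumerations. -/
abbrev IncSeq : Type := {f : ℕ → ℕ // StrictMono f}

/-- A subset of `[ω]^ω` is bounded if some element of `[ω]^ω` `≤*`-dominates it. -/
def Bounded (A : Set IncSeq) : Prop := ∃ b : IncSeq, ∀ a ∈ A, LeStar a.1 b.1

/-- A subset of `[ω]^ω` is dominating if it `≤*`-dominates every element of `[ω]^ω`. -/
def Dominating (D : Set IncSeq) : Prop := ∀ a : IncSeq, ∃ d ∈ D, LeStar a.1 d.1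

/-- A subset of `[ω]^ω` is `≤_U`-bounded if some element of `[ω]^ω` `≤_U`-dominates it. -/
def UBounded (U : Ultrafilter ℕ) (A : Set IncSeq) : Prop := ∃ b : IncSeq, ∀ a ∈ A, LeU U a.1 b.1

/-- `𝔟`: the least cardinality of an unbounded subset of `[ω]^ω`. -/
noncomputable def frakB : Cardinal := sInf {c | ∃ A : Set IncSeq, ¬ Bounded A ∧ c = #A}

/-- `𝔡`: the least cardinality of a dominating subset of `[ω]^ω`. -/
noncomputable def frakD : Cardinal := sInf {c | ∃ D : Set IncSeq, Dominating D ∧ c = #D}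

/-- `𝔟(U)`: the least cardinality of a `≤_U`-unbounded subset of `[ω]^ω`. -/
noncomputable def frakBU (U : Ultrafilter ℕ) : Cardinal :=
  sInf {c | ∃ A : Set IncSeq, ¬ UBounded U A ∧ c = #A}

/-- A set `A ⊆ [ω]^ω` is `𝔡`-unbounded if `|A| ≥ 𝔡` and every bounded subset of `A`
has cardinality less than `𝔡`. -/
def DUnbounded (A : Set IncSeq) : Prop :=
  frakD ≤ #A ∧ ∀ B ⊆ A, Bounded B → #B < frakD

/-- Every function is pointwise below a strictly increasing one. -/
theorem exists_incSeq_ge (f : ℕ → ℕ) : ∃ g : IncSeq, ∀ n, f n ≤ g.1 n := by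
  refine ⟨⟨fun n => ∑ i ∈ Finset.range (n + 1), (f i + 1), strictMono_nat_of_lt_succ fun n => ?_⟩,
    fun n => ?_⟩
  · rw [Finset.sum_range_succ _ (n + 1)]
    omega
  · simp only [Finset.sum_range_succ _ n]
    omega

theorem bounded_range_of_finite {ι : Type} [Finite ι] (g : ι → IncSeq) :
    Bounded (Set.range g) := by
  have := Fintype.ofFinite ι
  obtain ⟨b, hb⟩ := exists_incSeq_ge fun n => ∑ i, (g i).1 n
  refine ⟨b, ?_⟩
  rintro _ ⟨i, rfl⟩
  have h : ∀ n, (g i).1 n ≤ b.1 n := fun n =>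
    (Finset.single_le_sum (f := fun i => (g i).1 n) (fun _ _ => Nat.zero_le _)
      (Finset.mem_univ i)).trans (hb n)
  simp [LeStar, h]

theorem bounded_of_mk_lt_frakB {A : Set IncSeq} (h : #A < frakB) : Bounded A := by
  by_contra hA
  exact notMem_of_lt_csInf' h ⟨A, hA, rfl⟩

/-- A family indexed by the finite subsets of a set of size less than `𝔟` is bounded. -/
theorem bounded_range_finset {κ : Type} (h : #κ < frakB) (g : Finset κ → IncSeq) :
    Bounded (Set.range g) := by
  rcases finite_or_infinite κ with hκ | hκ
  · exact bounded_range_of_finite g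
  · refine bounded_of_mk_lt_frakB (mk_range_le.trans_lt ?_)
    rwa [mk_finset_of_infinite]

/-- A member of an unbounded set can exceed `d` infinitely often on each of a given family of
infinite sets, provided families of sequences with that index type are bounded. -/
theorem exists_mem_forall_infinite_inter {X : Set IncSeq} (hX : ¬ Bounded X) {ι : Type}
    (hι : ∀ g : ι → IncSeq, Bounded (Set.range g)) (F : ι → Set ℕ) (d : IncSeq) :
    ∃ x ∈ X, ∀ i, (F i).Infinite → (F i ∩ {n | d.1 n < x.1 n}).Infinite := by
  have key : ∀ i, ∃ g : IncSeq, (F i).Infinite →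
      ∀ n, ∃ m ∈ F i, n < m ∧ d.1 m ≤ g.1 n := by
    intro i
    by_cases hF : (F i).Infinite
    · choose next hmem hlt using fun n => hF.exists_gt n
      obtain ⟨g, hg⟩ := exists_incSeq_ge fun n => d.1 (next n)
      exact ⟨g, fun _ n => ⟨next n, hmem n, hlt n, hg n⟩⟩
    · exact ⟨d, fun h => absurd h hF⟩
  choose g hg using key
  obtain ⟨b, hb⟩ := hι g
  have : ∃ x ∈ X, ¬ LeStar x.1 b.1 := by
    by_contra! h
    exact hX ⟨b, h⟩
  obtain ⟨x, hxX, hx⟩ := this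
  refine ⟨x, hxX, fun i hi => Set.infinite_of_forall_exists_gt fun N => ?_⟩
  have hinf : ({n | ¬ x.1 n ≤ b.1 n} \ {n | ¬ (g i).1 n ≤ b.1 n}).Infinite :=
    Set.Infinite.sdiff hx (hb (g i) ⟨i, rfl⟩)
  obtain ⟨n, ⟨hn₁, hn₂⟩, hNn⟩ := hinf.exists_gt N
  obtain ⟨m, hmF, hnm, hdm⟩ := hg i hi n
  have hxm := x.2.monotone hnm.le
  simp only [Set.mem_ofPred_eq, not_not] at hn₁ hn₂
  refine ⟨m, ⟨hmF, ?_⟩, by omega⟩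
  simp only [Set.mem_ofPred_eq]
  omega

/-- A transfinite recursion along a well-order with small initial segments: all finite
intersections of the sets `[d i < x i]` can be made infinite. -/
theorem exists_forall_finset_infinite {X : Set IncSeq} (hX : ¬ Bounded X) {κ : Type}
    [LinearOrder κ] [WellFoundedLT κ] (hκ : ∀ i : κ, #(Set.Iio i) < frakB) (d : κ → IncSeq) :
    ∃ x : κ → IncSeq, (∀ i, x i ∈ X) ∧
      ∀ s : Finset κ, (⋂ i ∈ s, {n | (d i).1 n < (x i).1 n}).Infinite := by
  choose next hmem hnext using fun (i : κ) (F : Finset (Set.Iio i) → Set ℕ) =>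
    exists_mem_forall_infinite_inter hX (bounded_range_finset (hκ i)) F (d i)
  let x : κ → IncSeq := (wellFounded_lt (α := κ)).fix fun i ih =>
    next i fun s => ⋂ j ∈ s, {n | (d j).1 n < (ih j.1 j.2).1 n}
  have hx : ∀ i, x i = next i fun s => ⋂ j ∈ s, {n | (d j).1 n < (x j).1 n} := fun i =>
    WellFounded.fix_eq _ _ i
  refine ⟨x, fun i => hx i ▸ hmem i _, fun s => ?_⟩
  induction s using Finset.induction_on_max with
  | empty => simpa using Set.infinite_univ
  | insert i s hs ih =>
    have hsub : (⋂ j ∈ s.subtype (· ∈ Set.Iio i), {n | (d j).1 n < (x j).1 n}) =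
        ⋂ j ∈ s, {n | (d j).1 n < (x j).1 n} := by
      ext n
      simp only [Set.mem_iInter, Finset.mem_subtype, Subtype.forall, Set.mem_Iio]
      exact ⟨fun h j hj => h j (hs j hj) hj, fun h j _ hj => h j hj⟩
    have := hnext i (fun s => ⋂ j ∈ s, {n | (d j).1 n < (x j).1 n})
      (s.subtype (· ∈ Set.Iio i)) (hsub ▸ ih)
    rw [← hx i, hsub] at this
    rwa [Finset.set_biInter_insert, Set.inter_comm]

/-- A family of sets with infinite finite intersections is contained in a free ultrafilter. -/
theorem exists_free_ultrafilter {κ : Type} (S : κ → Set ℕ)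
    (hS : ∀ s : Finset κ, (⋂ i ∈ s, S i).Infinite) :
    ∃ U : Ultrafilter ℕ, Free U ∧ ∀ i, S i ∈ U := by
  have hne : ((⨅ i, Filter.principal (S i)) ⊓ Filter.cofinite).NeBot := by
    rw [(Filter.hasBasis_iInf_principal_finite S).inf_neBot_iff]
    intro t ht c hc
    have h := (hS ht.toFinset).sdiff (Filter.mem_cofinite.1 hc)
    simpa [Set.sdiff_eq] using h.nonempty
  obtain ⟨U, hU⟩ := Ultrafilter.exists_le
    ((⨅ i, Filter.principal (S i)) ⊓ Filter.cofinite)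
  exact ⟨U, hU.trans inf_le_right, fun i =>
    Filter.le_principal_iff.1 ((hU.trans inf_le_left).trans (iInf_le _ i))⟩

theorem exists_dominating_mk_eq_frakD : ∃ D : Set IncSeq, Dominating D ∧ frakD = #D :=
  csInf_mem (s := {c | ∃ D : Set IncSeq, Dominating D ∧ c = #D})
    ⟨_, Set.univ, fun a => ⟨a, trivial, by simp [LeStar]⟩, rfl⟩

/-- assume `𝔟 = 𝔡`. Then every unbounded set `X ⊆ [ω]^ω` is
`≤_U`-unbounded for some free ultrafilter `U`. -/
theorem stmt11 (hbd : frakB = frakD)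
    (X : Set IncSeq) (hX : ¬ Bounded X) :
    ∃ U : Ultrafilter ℕ, Free U ∧ ¬ UBounded U X := by
  obtain ⟨D, hD, hcard⟩ := exists_dominating_mk_eq_frakD
  have hmk : #(frakD.ord.ToType) = #D := by rw [mk_ord_toType, hcard]
  obtain ⟨e⟩ := Cardinal.eq.1 hmk
  obtain ⟨x, hxX, hx⟩ := exists_forall_finset_infinite hX
    (fun i : frakD.ord.ToType => (mk_Iio_toType_ord_lt i).trans_eq hbd.symm) fun i => (e i).1
  obtain ⟨U, hfree, hU⟩ := exists_free_ultrafilter _ hx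
  refine ⟨U, hfree, ?_⟩
  rintro ⟨b, hb⟩
  obtain ⟨c, hc, hbc⟩ := hD b
  obtain ⟨i, hi⟩ := e.surjective ⟨c, hc⟩
  have hbcU : ∀ᶠ n in (U : Filter ℕ), b.1 n ≤ c.1 n := hfree hbc
  have hxb : ∀ᶠ n in (U : Filter ℕ), (x i).1 n ≤ b.1 n := hb _ (hxX i)
  have hcx : ∀ᶠ n in (U : Filter ℕ), (e i).1.1 n < (x i).1 n := hU i
  rw [hi] at hcx
  obtain ⟨n, h₁, h₂, h₃⟩ := (hbcU.and (hxb.and hcx)).exists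
  exact absurd h₃ (h₂.trans h₁).not_gt
end
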